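/- Let F ⊆ E with c_p < r(F) < c_{p+1} for some p ∈ {1, …, m−1}. The rank induced forbidden set inequality (c_{p+1} − r(F))·x(F) − (r(F) − c_p)·x(E∖F) ≤ c_p·(c_{p+1} − r(F)) defines a facet of P^c(E) if and only if either (a) c_p = c_1 = 0 (so p = 1 and c_1 = 0) and the inequality x(F) ≤ r(F) defines a facet of P^{(c_{p+1})}(E), or (b) c_p > 0, F is closed, and (E∖F is c_{p+1}-inseparable or c_{p+1} < r(E)). -/

import Mathlib

open Finset

/-- A (loopless) matroid on a finite ground set, given by its independent sets. -/
structure FinMatroid (α : Type*) [Fintype α] [DecidableEq α] where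
  Indep : Finset α → Prop
  empty_indep : Indep ∅
  subset_indep : ∀ ⦃I J : Finset α⦄, Indep J → I ⊆ J → Indep I
  exchange : ∀ ⦃I J : Finset α⦄, Indep I → Indep J → I.card < J.card →
    ∃ e ∈ J \ I, Indep (insert e I)
  loopless : ∀ e : α, Indep {e}

variable {α : Type*} [Fintype α] [DecidableEq α]

open Classical in
/-- The rank of a set: the maximum cardinality of an independent subset. -/
noncomputable def FinMatroid.r (M : FinMatroid α) (F : Finset α) : ℕ :=
  (F.powerset.filter M.Indep).sup Finset.card

/-- incidence vector -/
noncomputable def incVec (I : Finset α) : α → ℝ := fun e => if e ∈ I then 1 else 0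

/-- x(S) = ∑_{e ∈ S} x_e -/
noncomputable def fsum (x : α → ℝ) (S : Finset α) : ℝ := ∑ e ∈ S, x e

/-- closed set -/
def FinMatroid.ClosedSet (M : FinMatroid α) (F : Finset α) : Prop :=
  ∀ e ∉ F, M.r F < M.r (insert e F)

/-- F is separable -/
def FinMatroid.Separable (M : FinMatroid α) (F : Finset α) : Prop :=
  ∃ F₁ F₂ : Finset α, F₁ ≠ ∅ ∧ F₂ ≠ ∅ ∧ Disjoint F₁ F₂ ∧ F₁ ∪ F₂ = F ∧
    M.r F₁ + M.r F₂ ≤ M.r F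

def FinMatroid.Inseparable (M : FinMatroid α) (F : Finset α) : Prop :=
  ¬ M.Separable F

/-- the k-rank r^k(F) = k - r(E \ F), as an integer -/
noncomputable def FinMatroid.krank (M : FinMatroid α) (k : ℕ) (F : Finset α) : ℤ :=
  (k : ℤ) - (M.r Fᶜ : ℤ)

/-- F is k-separable -/
noncomputable def FinMatroid.kSeparable (M : FinMatroid α) (k : ℕ) (F : Finset α) : Prop :=
  ∃ F₁ F₂ : Finset α, F₁ ≠ ∅ ∧ F₂ ≠ ∅ ∧ Disjoint F₁ F₂ ∧ F₁ ∪ F₂ = F ∧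
    M.krank k F₁ + M.krank k F₂ = M.krank k F

noncomputable def FinMatroid.kInseparable (M : FinMatroid α) (k : ℕ) (F : Finset α) : Prop :=
  ¬ M.kSeparable k F

/-- convex hull of incidence vectors of independent sets of cardinality exactly k -/
noncomputable def exactPolytope (M : FinMatroid α) (k : ℕ) : Set (α → ℝ) :=
  convexHull ℝ {x | ∃ I : Finset α, M.Indep I ∧ I.card = k ∧ x = incVec I}

/-- the cardinality constrained matroid polytope P^c(E) -/
noncomputable def cardPolytope (M : FinMatroid α) {m : ℕ} (c : Fin m → ℕ) : Set (α → ℝ) :=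
  convexHull ℝ {x | ∃ I : Finset α, M.Indep I ∧ (∃ p : Fin m, I.card = c p) ∧ x = incVec I}

/-- dimension of (the affine hull of) a subset of ℝ^E -/
noncomputable def polyDim (s : Set (α → ℝ)) : ℕ :=
  Module.finrank ℝ (affineSpan ℝ s).direction

/-- `a · x ≤ a₀` defines a facet of `P` -/
noncomputable def IsFacet (P : Set (α → ℝ)) (a : α → ℝ) (a₀ : ℝ) : Prop :=
  (∀ x ∈ P, ∑ e, a e * x e ≤ a₀) ∧
  polyDim {x ∈ P | ∑ e, a e * x e = a₀} + 1 = polyDim P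

namespace FinMatroid

variable (M : FinMatroid α)

theorem card_le_r {I F : Finset α} (hI : M.Indep I) (hIF : I ⊆ F) : I.card ≤ M.r F := by
  classical
  exact Finset.le_sup (f := Finset.card) (by simp [hI, hIF])

theorem exists_indep_card_eq_r (F : Finset α) : ∃ I ⊆ F, M.Indep I ∧ I.card = M.r F := by
  classical
  obtain ⟨I, hI, h⟩ := Finset.exists_mem_eq_sup (F.powerset.filter M.Indep)
    ⟨∅, by simp [M.empty_indep]⟩ Finset.card
  simp only [mem_filter, mem_powerset] at hI
  exact ⟨I, hI.1, hI.2, h.symm⟩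

theorem r_mono {F G : Finset α} (h : F ⊆ G) : M.r F ≤ M.r G := by
  obtain ⟨I, hIF, hI, hc⟩ := M.exists_indep_card_eq_r F
  exact hc ▸ M.card_le_r hI (hIF.trans h)

theorem r_empty : M.r ∅ = 0 := by
  obtain ⟨I, hI, -, hc⟩ := M.exists_indep_card_eq_r ∅
  rw [← hc, subset_empty.1 hI, card_empty]

theorem r_pos {F : Finset α} (h : F.Nonempty) : 0 < M.r F := by
  obtain ⟨e, he⟩ := h
  have h := M.card_le_r (M.loopless e) (singleton_subset_iff.2 he)
  rwa [card_singleton] at h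

theorem exists_extend {I J : Finset α} (hI : M.Indep I) (hJ : M.Indep J) {n : ℕ}
    (hIn : I.card ≤ n) (hnJ : n ≤ J.card) :
    ∃ K, I ⊆ K ∧ K ⊆ I ∪ J ∧ M.Indep K ∧ K.card = n := by
  induction n, hIn using Nat.le_induction with
  | base => exact ⟨I, Subset.rfl, subset_union_left, hI, rfl⟩
  | succ n _ ih =>
    obtain ⟨K, hIK, hKU, hK, hc⟩ := ih (by omega)
    obtain ⟨e, he, hi⟩ := M.exchange hK hJ (by omega)
    rw [mem_sdiff] at he
    refine ⟨insert e K, hIK.trans (subset_insert _ _),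
      insert_subset (mem_union_right _ he.1) hKU, hi, ?_⟩
    rw [card_insert_of_notMem he.2, hc]

theorem exists_extend_in {I G : Finset α} (hI : M.Indep I) (hIG : I ⊆ G) {n : ℕ}
    (hIn : I.card ≤ n) (hn : n ≤ M.r G) :
    ∃ K, I ⊆ K ∧ K ⊆ G ∧ M.Indep K ∧ K.card = n := by
  obtain ⟨J, hJG, hJ, hc⟩ := M.exists_indep_card_eq_r G
  obtain ⟨K, h1, h2, h3, h4⟩ := M.exists_extend hI hJ hIn (hc ▸ hn)
  exact ⟨K, h1, h2.trans (union_subset hIG hJG), h3, h4⟩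

theorem card_inter_le_r {I : Finset α} (hI : M.Indep I) (F : Finset α) :
    (I ∩ F).card ≤ M.r F :=
  M.card_le_r (M.subset_indep hI inter_subset_left) inter_subset_right

theorem r_union_add_r_le (F A B : Finset α) :
    M.r (F ∪ (A ∪ B)) + M.r F ≤ M.r (F ∪ A) + M.r (F ∪ B) := by
  obtain ⟨X, hXF, hX, hXc⟩ := M.exists_indep_card_eq_r F
  obtain ⟨T, hXT, hTG, hT, hTc⟩ := M.exists_extend_in (G := F ∪ (A ∪ B)) hX
    (hXF.trans subset_union_left) (hXc ▸ M.r_mono subset_union_left) le_rfl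
  have h1 := M.card_inter_le_r hT (F ∪ A)
  have h2 := M.card_inter_le_r hT (F ∪ B)
  have h3 := card_union_add_card_inter (T ∩ (F ∪ A)) (T ∩ (F ∪ B))
  have h4 : T ∩ (F ∪ A) ∪ T ∩ (F ∪ B) = T := by
    rw [← inter_union_distrib_left, inter_eq_left]
    exact hTG.trans (by grind)
  have h5 : X ⊆ T ∩ (F ∪ A) ∩ (T ∩ (F ∪ B)) := by grind
  have h6 := card_le_card h5
  rw [h4] at h3
  omega

/-- A weight function that is constant on the `k`-element independent subsets of `G` meeting `F`
in a basis is constant on `G \ F`, provided that the truncation to rank `k` of the contraction by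
`F` of the restriction to `G` is connected. -/
theorem weight_eq_of_sum_eq {F G : Finset α} (hFG : F ⊆ G) {k : ℕ}
    (hkG : k ≤ M.r G)
    (hconn : ∀ A B : Finset α, A.Nonempty → B.Nonempty → Disjoint A B → A ∪ B = G \ F →
      k + M.r F < min k (M.r (F ∪ A)) + min k (M.r (F ∪ B)))
    {b : α → ℝ} {d : ℝ}
    (hb : ∀ T ⊆ G, M.Indep T → T.card = k → (T ∩ F).card = M.r F → ∑ e ∈ T, b e = d)
    {e f : α} (he : e ∈ G \ F) (hf : f ∈ G \ F) : b f = b e := by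
  by_contra hne
  set A := (G \ F).filter (fun x => b x = b e) with hA
  set B := (G \ F).filter (fun x => ¬ b x = b e) with hB
  have hAB : A ∪ B = G \ F := filter_union_filter_not_eq _ _
  have hdisj : Disjoint A B := disjoint_filter_filter_not _ _ _
  have hlt := hconn A B ⟨e, by simp [hA, he]⟩ ⟨f, by simp only [hB, mem_filter]; exact ⟨hf, hne⟩⟩
    hdisj hAB
  obtain ⟨X, hXF, hX, hXc⟩ := M.exists_indep_card_eq_r F
  have hFA : M.r F ≤ M.r (F ∪ A) := M.r_mono subset_union_left
  obtain ⟨Y, hXY, hYA, hY, hYc⟩ := M.exists_extend_in (G := F ∪ A) (n := min k (M.r (F ∪ A))) hX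
    (hXF.trans subset_union_left) (by omega) (min_le_right _ _)
  have hAG : F ∪ A ⊆ G := union_subset hFG ((filter_subset _ _).trans sdiff_subset)
  have hBG : F ∪ B ⊆ G := union_subset hFG ((filter_subset _ _).trans sdiff_subset)
  obtain ⟨T, hYT, hTG, hT, hTc⟩ := M.exists_extend_in hY (hYA.trans hAG) (by omega) hkG
  have hTF : (T ∩ F).card = M.r F :=
    le_antisymm (M.card_inter_le_r hT F)
      (hXc ▸ card_le_card (subset_inter (hXY.trans hYT) hXF))
  have hTA : min k (M.r (F ∪ A)) ≤ (T ∩ (F ∪ A)).card :=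
    hYc ▸ card_le_card (subset_inter hYT hYA)
  have hcard := card_union_add_card_inter (T ∩ (F ∪ A)) (T ∩ (F ∪ B))
  have hu : T ∩ (F ∪ A) ∪ T ∩ (F ∪ B) = T := by
    rw [← inter_union_distrib_left, inter_eq_left]
    intro x hx
    have := hTG hx
    by_cases hxF : x ∈ F
    · simp [hxF]
    · have : x ∈ A ∪ B := hAB ▸ mem_sdiff.2 ⟨this, hxF⟩
      grind
  have hi : T ∩ (F ∪ A) ∩ (T ∩ (F ∪ B)) = T ∩ F := by
    rw [← inter_inter_distrib_left, ← union_inter_distrib_left,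
      disjoint_iff_inter_eq_empty.1 hdisj, union_empty]
  rw [hu, hi] at hcard
  obtain ⟨J, hJB, hJ, hJc⟩ := M.exists_indep_card_eq_r (F ∪ B)
  obtain ⟨g, hg, hgi⟩ := M.exchange (M.subset_indep hT (inter_subset_left (s₂ := F ∪ B))) hJ
    (by omega)
  rw [mem_sdiff] at hg
  have hgT : g ∉ T := fun h => hg.2 (mem_inter.2 ⟨h, hJB hg.1⟩)
  have hgF : g ∉ F := by
    intro h
    have h1 : insert g (T ∩ F) ⊆ insert g (T ∩ (F ∪ B)) :=
      insert_subset_insert _ (inter_subset_inter_left subset_union_left)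
    have h2 := M.card_le_r (M.subset_indep hgi h1) (insert_subset h inter_subset_right)
    rw [card_insert_of_notMem (by simp [hgT])] at h2
    omega
  have hgB : g ∈ B := (mem_union.1 (hJB hg.1)).resolve_left hgF
  obtain ⟨T', hsub, hT'U, hT', hT'c⟩ := M.exists_extend hgi hT (n := k)
    (by rw [card_insert_of_notMem hg.2]; omega) hTc.ge
  have hT'I : T' ⊆ insert g T := hT'U.trans (by grind)
  have hd := card_sdiff_of_subset hT'I
  rw [card_insert_of_notMem hgT, hT'c, hTc, Nat.add_sub_cancel_left, card_eq_one] at hd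
  obtain ⟨a, ha⟩ := hd
  have ha' : a ∈ insert g T \ T' := ha ▸ mem_singleton_self a
  have hgT' : g ∈ T' := hsub (mem_insert_self _ _)
  have haT : a ∈ T ∧ a ∉ T' := by grind
  have haA : b a = b e := by
    have h1 : a ∉ F ∪ B := fun h => haT.2 (hsub (mem_insert_of_mem (mem_inter.2 ⟨haT.1, h⟩)))
    have h2 : a ∈ G := hTG haT.1
    grind
  have hT'F : (T' ∩ F).card = M.r F := by
    refine le_antisymm (M.card_inter_le_r hT' F) (hTF ▸ card_le_card ?_)
    intro x hx
    rw [mem_inter] at hx ⊢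
    exact ⟨hsub (by grind), hx.2⟩
  have s1 := hb T hTG hT hTc hTF
  have s2 := hb T' (hT'I.trans (insert_subset (hBG (mem_union_right _ hgB)) hTG)) hT' hT'c hT'F
  have s3 := sum_sdiff (f := b) hT'I
  rw [ha, sum_singleton, sum_insert hgT, s1, s2] at s3
  simp only [hB, mem_filter] at hgB
  exact hgB.2 (by linarith)

theorem weight_eq_of_sum_eq_of_lt {G : Finset α} {k : ℕ} (hk : 0 < k) (hkG : k < M.r G)
    {b : α → ℝ} {d : ℝ} (hb : ∀ T ⊆ G, M.Indep T → T.card = k → ∑ e ∈ T, b e = d)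
    {e f : α} (he : e ∈ G) (hf : f ∈ G) : b f = b e := by
  refine M.weight_eq_of_sum_eq (F := ∅) (empty_subset G) hkG.le ?_
    (fun T h1 h2 h3 _ => hb T h1 h2 h3) (by simpa using he) (by simpa using hf)
  intro A B hA hB _ hAB
  rw [sdiff_empty] at hAB
  have h1 := M.r_union_add_r_le ∅ A B
  have h2 := M.r_pos hA
  have h3 := M.r_pos hB
  simp only [empty_union, hAB, r_empty] at h1 ⊢
  omega

theorem compl_left_of_union_eq_compl {F A B : Finset α} (hd : Disjoint A B) (hAB : A ∪ B = Fᶜ) :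
    Aᶜ = F ∪ B := by
  ext x
  have h1 : x ∈ A ∪ B ↔ x ∉ F := by rw [hAB, mem_compl]
  have h2 : x ∈ A → x ∉ B := fun h => disjoint_left.1 hd h
  simp only [mem_compl, mem_union] at h1 ⊢
  tauto

/-- `Fᶜ` is `k`-separable iff it splits into two nonempty parts whose ranks in the contraction by
`F` sum to `k - r F`. -/
theorem kSeparable_compl_iff {k : ℕ} {F : Finset α} : M.kSeparable k Fᶜ ↔
    ∃ A B : Finset α, A.Nonempty ∧ B.Nonempty ∧ Disjoint A B ∧ A ∪ B = Fᶜ ∧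
      M.r (F ∪ A) + M.r (F ∪ B) = k + M.r F := by
  unfold kSeparable krank
  refine exists_congr fun A => exists_congr fun B => ?_
  rw [← nonempty_iff_ne_empty, ← nonempty_iff_ne_empty]
  refine and_congr_right fun _ => and_congr_right fun _ => and_congr_right fun hd =>
    and_congr_right fun hAB => ?_
  rw [compl_left_of_union_eq_compl hd hAB,
    compl_left_of_union_eq_compl hd.symm ((union_comm B A).trans hAB), compl_compl]
  omega

theorem weight_eq_of_closed {F : Finset α} {k : ℕ} (hF : M.ClosedSet F) (hFk : M.r F < k)
    (hkE : k ≤ M.r univ) (hconn : M.kInseparable k Fᶜ ∨ k < M.r univ) {b : α → ℝ} {d : ℝ}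
    (hb : ∀ T, M.Indep T → T.card = k → (T ∩ F).card = M.r F → ∑ e ∈ T, b e = d)
    {e f : α} (he : e ∉ F) (hf : f ∉ F) : b f = b e := by
  refine M.weight_eq_of_sum_eq (subset_univ F) hkE ?_ (fun T _ => hb T)
    (by simpa using he) (by simpa using hf)
  intro A B hA hB hd hAB
  rw [← compl_eq_univ_sdiff] at hAB
  have hr : ∀ A : Finset α, A.Nonempty → A ⊆ Fᶜ → M.r F < M.r (F ∪ A) := by
    rintro A ⟨x, hx⟩ hAF
    exact (hF x (mem_compl.1 (hAF hx))).trans_le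
      (M.r_mono (insert_subset (mem_union_right _ hx) subset_union_left))
  have h1 := hr A hA (hAB ▸ subset_union_left)
  have h2 := hr B hB (hAB ▸ subset_union_right)
  have h3 := M.r_union_add_r_le F A B
  rw [hAB, union_compl] at h3
  have h4 : k < M.r univ ∨ M.r (F ∪ A) + M.r (F ∪ B) ≠ k + M.r F :=
    hconn.symm.imp_right fun h h' => h (M.kSeparable_compl_iff.2 ⟨A, B, hA, hB, hd, hAB, h'⟩)
  omega

end FinMatroid

theorem sum_mul_incVec (b : α → ℝ) (I : Finset α) : ∑ e, b e * incVec I e = ∑ e ∈ I, b e := by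
  simp [incVec, Finset.sum_ite_mem]

theorem setOf_mem_convexHull_and_eq {V : Set (α → ℝ)} {a : α → ℝ} {a₀ : ℝ}
    (h : ∀ v ∈ V, ∑ e, a e * v e ≤ a₀) :
    {x ∈ convexHull ℝ V | ∑ e, a e * x e = a₀} =
      convexHull ℝ {v ∈ V | ∑ e, a e * v e = a₀} := by
  have hlin : ∀ (s t : ℝ) (x y : α → ℝ), ∑ e, a e * (s • x + t • y) e =
      s * ∑ e, a e * x e + t * ∑ e, a e * y e := by
    intro s t x y
    rw [mul_sum, mul_sum, ← sum_add_distrib]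
    exact sum_congr rfl fun e _ => by simp; ring
  refine Set.Subset.antisymm ?_ ?_
  · have hsub : convexHull ℝ V ⊆ {x | ∑ e, a e * x e ≤ a₀ ∧
        (∑ e, a e * x e = a₀ → x ∈ convexHull ℝ {v ∈ V | ∑ e, a e * v e = a₀})} := by
      refine convexHull_min (fun v hv => ⟨h v hv, fun he => subset_convexHull ℝ _ ⟨hv, he⟩⟩) ?_
      rintro x ⟨hx, hx'⟩ y ⟨hy, hy'⟩ s t hs ht hst
      have hsx := mul_le_mul_of_nonneg_left hx hs
      have hty := mul_le_mul_of_nonneg_left hy ht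
      have hsum : s * a₀ + t * a₀ = a₀ := by rw [← add_mul, hst, one_mul]
      rw [Set.mem_ofPred_eq, hlin]
      refine ⟨by linarith, fun he => ?_⟩
      obtain rfl | hs := hs.eq_or_lt
      · obtain rfl : t = 1 := by linarith
        simpa using hy' (by linarith)
      obtain rfl | ht := ht.eq_or_lt
      · obtain rfl : s = 1 := by linarith
        simpa using hx' (by linarith)
      exact convex_convexHull ℝ _ (hx' (le_antisymm hx (le_of_mul_le_mul_left (by linarith) hs)))
        (hy' (le_antisymm hy (le_of_mul_le_mul_left (by linarith) ht))) hs.le ht.le hst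
    exact fun x hx => (hsub hx.1).2 hx.2
  · refine convexHull_min (fun v hv => ⟨subset_convexHull ℝ _ hv.1, hv.2⟩) ?_
    rintro x ⟨hx, hx'⟩ y ⟨hy, hy'⟩ s t hs ht hst
    refine ⟨convex_convexHull ℝ _ hx hy hs ht hst, ?_⟩
    rw [hlin, hx', hy', ← add_mul, hst, one_mul]

theorem polyDim_convexHull (V : Set (α → ℝ)) : polyDim (convexHull ℝ V) = polyDim V := by
  rw [polyDim, affineSpan_convexHull, polyDim]

theorem isFacet_convexHull_iff {V : Set (α → ℝ)} {a : α → ℝ} {a₀ : ℝ}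
    (h : ∀ v ∈ V, ∑ e, a e * v e ≤ a₀) :
    IsFacet (convexHull ℝ V) a a₀ ↔
      polyDim {v ∈ V | ∑ e, a e * v e = a₀} + 1 = polyDim V := by
  rw [IsFacet, setOf_mem_convexHull_and_eq h, polyDim_convexHull, polyDim_convexHull]
  refine and_iff_right fun x hx => ?_
  have hconv : Convex ℝ {x : α → ℝ | ∑ e, a e * x e ≤ a₀} :=
    convex_halfSpace_le (dotProductEquiv ℝ α a).isLinear a₀
  exact convexHull_min h hconv hx

/-- The weight vectors that are constant on `S`. -/
noncomputable def constWeights (S : Set (α → ℝ)) : Submodule ℝ (α → ℝ) :=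
  (vectorSpan ℝ S).dualAnnihilator.comap (dotProductEquiv ℝ α).toLinearMap

theorem mem_constWeights_iff {S : Set (α → ℝ)} {b : α → ℝ} :
    b ∈ constWeights S ↔ ∀ x ∈ S, ∀ y ∈ S, ∑ e, b e * x e = ∑ e, b e * y e := by
  rw [constWeights, Submodule.mem_comap, Submodule.mem_dualAnnihilator]
  refine ⟨fun h x hx y hy => ?_, fun h w hw => ?_⟩
  · have := h _ (vsub_mem_vectorSpan ℝ hx hy)
    rw [vsub_eq_sub, map_sub, sub_eq_zero] at this
    exact this
  · have hle : vectorSpan ℝ S ≤ LinearMap.ker (dotProductEquiv ℝ α b) := by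
      rw [vectorSpan_def, Submodule.span_le]
      rintro _ ⟨x, hx, y, hy, rfl⟩
      refine LinearMap.mem_ker.2 ((map_sub _ x y).trans (sub_eq_zero.2 ?_))
      exact h x hx y hy
    exact hle hw

theorem mem_constWeights_iff_exists {S : Set (α → ℝ)} (hS : S.Nonempty) {b : α → ℝ} :
    b ∈ constWeights S ↔ ∃ d, ∀ x ∈ S, ∑ e, b e * x e = d := by
  rw [mem_constWeights_iff]
  obtain ⟨y, hy⟩ := hS
  exact ⟨fun h => ⟨_, fun x hx => h x hx y hy⟩,
    fun ⟨d, hd⟩ x hx y hy => (hd x hx).trans (hd y hy).symm⟩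

theorem polyDim_add_finrank_constWeights (S : Set (α → ℝ)) :
    polyDim S + Module.finrank ℝ (constWeights S) = Fintype.card α := by
  rw [polyDim, direction_affineSpan, constWeights, Submodule.comap_equiv_eq_map_symm,
    LinearEquiv.finrank_map_eq, Subspace.finrank_add_finrank_dualAnnihilator_eq,
    Module.finrank_fintype_fun_eq_card]

theorem polyDim_eq_card_of_forall {S : Set (α → ℝ)} (hS : S.Nonempty)
    (h : ∀ (b : α → ℝ) (d : ℝ), (∀ x ∈ S, ∑ e, b e * x e = d) → b = 0) :
    polyDim S = Fintype.card α := by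
  have hbot : constWeights S = ⊥ := by
    rw [Submodule.eq_bot_iff]
    intro b hb
    obtain ⟨d, hd⟩ := (mem_constWeights_iff_exists hS).1 hb
    exact h b d hd
  have := polyDim_add_finrank_constWeights S
  rwa [hbot, finrank_bot, add_zero] at this

theorem polyDim_add_one_eq_card_iff {S : Set (α → ℝ)} (hS : S.Nonempty) {a : α → ℝ} {a₀ : ℝ}
    (ha : a ≠ 0) (haS : ∀ x ∈ S, ∑ e, a e * x e = a₀) :
    polyDim S + 1 = Fintype.card α ↔
      ∀ (b : α → ℝ) (d : ℝ), (∀ x ∈ S, ∑ e, b e * x e = d) → ∃ t : ℝ, t • a = b := by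
  have haC : a ∈ constWeights S := (mem_constWeights_iff_exists hS).2 ⟨a₀, haS⟩
  rw [← polyDim_add_finrank_constWeights S, Nat.add_left_cancel_iff, eq_comm,
    finrank_eq_one_iff_of_nonzero' (⟨a, haC⟩ : constWeights S) (by simpa using ha)]
  refine ⟨fun h b d hb => ?_, fun h ⟨b, hb⟩ => ?_⟩
  · obtain ⟨t, ht⟩ := h ⟨b, (mem_constWeights_iff_exists hS).2 ⟨d, hb⟩⟩
    exact ⟨t, congrArg Subtype.val ht⟩
  · obtain ⟨d, hd⟩ := (mem_constWeights_iff_exists hS).1 hb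
    obtain ⟨t, ht⟩ := h b d hd
    exact ⟨t, Subtype.ext ht⟩

theorem polyDim_insert_zero {S : Set (α → ℝ)} (hS : S.Nonempty) {a : α → ℝ} {a₀ : ℝ}
    (ha₀ : a₀ ≠ 0) (haS : ∀ x ∈ S, ∑ e, a e * x e = a₀) :
    polyDim (insert 0 S) = polyDim S + 1 := by
  obtain ⟨y, hy⟩ := hS
  have hker : vectorSpan ℝ S ≤ LinearMap.ker (dotProductEquiv ℝ α a) := by
    rw [vectorSpan_def, Submodule.span_le]
    rintro _ ⟨x, hx, z, hz, rfl⟩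
    refine LinearMap.mem_ker.2 ((map_sub _ x z).trans (sub_eq_zero.2 ?_))
    exact (haS x hx).trans (haS z hz).symm
  have hnot : (0 : α → ℝ) -ᵥ y ∉ vectorSpan ℝ S := by
    intro h
    have := hker h
    rw [LinearMap.mem_ker, vsub_eq_sub, map_sub, map_zero, zero_sub, neg_eq_zero] at this
    exact ha₀ ((haS y hy).symm.trans this)
  rw [polyDim, ← affineSpan_insert_affineSpan,
    AffineSubspace.direction_affineSpan_insert (mem_affineSpan ℝ hy), sup_comm,
    direction_affineSpan, Submodule.finrank_sup_span_singleton hnot, polyDim, direction_affineSpan]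

/-- The incidence vectors of the members of a set family. -/
def incVecs (P : Finset α → Prop) : Set (α → ℝ) := {x | ∃ I, P I ∧ x = incVec I}

theorem forall_mem_incVecs {P : Finset α → Prop} {b : α → ℝ} {p : ℝ → Prop} :
    (∀ x ∈ incVecs P, p (∑ e, b e * x e)) ↔ ∀ I, P I → p (∑ e ∈ I, b e) := by
  constructor
  · intro h I hI
    simpa only [sum_mul_incVec] using h _ ⟨I, hI, rfl⟩
  · rintro h _ ⟨I, hI, rfl⟩
    simpa only [sum_mul_incVec] using h I hI

theorem incVecs_congr {P Q : Finset α → Prop} (h : ∀ I, P I ↔ Q I) : incVecs P = incVecs Q := by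
  rw [funext fun I => propext (h I)]

theorem setOf_mem_incVecs_and_eq (P : Finset α → Prop) (a : α → ℝ) (a₀ : ℝ) :
    {v ∈ incVecs P | ∑ e, a e * v e = a₀} = incVecs fun I => P I ∧ ∑ e ∈ I, a e = a₀ := by
  ext v
  constructor
  · rintro ⟨⟨I, hI, rfl⟩, h⟩
    exact ⟨I, ⟨hI, by rwa [sum_mul_incVec] at h⟩, rfl⟩
  · rintro ⟨I, ⟨hI, h⟩, rfl⟩
    exact ⟨⟨I, hI, rfl⟩, by rwa [sum_mul_incVec]⟩

theorem isFacet_convexHull_incVecs_iff {P : Finset α → Prop} {a : α → ℝ} {a₀ : ℝ}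
    (h : ∀ I, P I → ∑ e ∈ I, a e ≤ a₀) :
    IsFacet (convexHull ℝ (incVecs P)) a a₀ ↔
      polyDim (incVecs fun I => P I ∧ ∑ e ∈ I, a e = a₀) + 1 = polyDim (incVecs P) := by
  rw [isFacet_convexHull_iff (forall_mem_incVecs (p := (· ≤ a₀)).2 h), setOf_mem_incVecs_and_eq]

theorem incVecs_eq_empty_or (P : Finset α → Prop) :
    incVecs (fun I => I = ∅ ∨ P I) = insert 0 (incVecs P) := by
  have h0 : incVec (∅ : Finset α) = 0 := by
    ext
    simp [incVec]
  ext v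
  constructor
  · rintro ⟨I, rfl | hI, rfl⟩
    · exact Or.inl h0
    · exact Or.inr ⟨I, hI, rfl⟩
  · rintro (rfl | ⟨I, hI, rfl⟩)
    · exact ⟨∅, Or.inl rfl, h0.symm⟩
    · exact ⟨I, Or.inr hI, rfl⟩

theorem polyDim_incVecs_eq_empty_or {P : Finset α → Prop} (hP : ∃ I, P I) {k : ℕ} (hk : k ≠ 0)
    (h : ∀ I, P I → I.card = k) :
    polyDim (incVecs fun I => I = ∅ ∨ P I) = polyDim (incVecs P) + 1 := by
  obtain ⟨I, hI⟩ := hP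
  rw [incVecs_eq_empty_or]
  refine polyDim_insert_zero ⟨_, I, hI, rfl⟩ (a := fun _ => 1) (Nat.cast_ne_zero.2 hk)
    (forall_mem_incVecs (p := (· = (k : ℝ))).2 fun J hJ => ?_)
  rw [sum_const, h J hJ, nsmul_one]

theorem sum_eq_inter_add_sdiff (b : α → ℝ) (I F : Finset α) :
    ∑ e ∈ I, b e = ∑ e ∈ I ∩ F, b e + ∑ e ∈ I \ F, b e := by
  rw [← sum_union (disjoint_sdiff_inter I F).symm, union_comm, sdiff_union_inter]

theorem sum_eq_card_mul_add {b : α → ℝ} {F : Finset α} {β γ : ℝ} (hβ : ∀ e ∈ F, b e = β)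
    (hγ : ∀ e ∉ F, b e = γ) (I : Finset α) :
    ∑ e ∈ I, b e = (I ∩ F).card * β + (I \ F).card * γ := by
  rw [sum_eq_inter_add_sdiff b I F, sum_congr rfl fun e he => hβ e (mem_inter.1 he).2,
    sum_congr rfl fun e he => hγ e (mem_sdiff.1 he).2, sum_const, sum_const, nsmul_eq_mul,
    nsmul_eq_mul]

namespace FinMatroid

variable (M : FinMatroid α)

theorem polyDim_incVecs_eq_card {P : Finset α → Prop} {q q' : ℕ} (hq : 0 < q)
    (hqr : q < M.r univ) (hq' : q' ≤ M.r univ) (hne : q ≠ q')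
    (hP : ∀ I, M.Indep I → I.card = q ∨ I.card = q' → P I) :
    polyDim (incVecs P) = Fintype.card α := by
  obtain ⟨I, -, -, hI, hIc⟩ := M.exists_extend_in M.empty_indep (empty_subset univ) (n := q)
    (by simp) hqr.le
  obtain ⟨J, -, -, hJ, hJc⟩ := M.exists_extend_in M.empty_indep (empty_subset univ) (n := q')
    (by simp) hq'
  refine polyDim_eq_card_of_forall ⟨_, I, hP I hI (Or.inl hIc), rfl⟩ fun b d hb => ?_
  replace hb := forall_mem_incVecs (p := (· = d)).1 hb
  ext e
  have hconst : ∀ f, b f = b e := fun f => M.weight_eq_of_sum_eq_of_lt hq hqr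
    (fun T _ hT hTc => hb T (hP T hT (Or.inl hTc))) (mem_univ e) (mem_univ f)
  have hsum : ∀ T : Finset α, ∑ f ∈ T, b f = T.card * b e := fun T => by
    rw [sum_congr rfl fun f _ => hconst f, sum_const, nsmul_eq_mul]
  have h1 := hb I (hP I hI (Or.inl hIc))
  have h2 := hb J (hP J hJ (Or.inr hJc))
  rw [hsum, hIc] at h1
  rw [hsum, hJc] at h2
  exact (mul_left_cancel₀ (sub_ne_zero.2 (Nat.cast_injective.ne hne : (q : ℝ) ≠ q'))
    (by rw [sub_mul, h1, h2, sub_self, mul_zero] : ((q : ℝ) - q') * b e = _ * 0))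

/-- The coefficients of the rank induced forbidden set inequality for the set `F` and the
cardinality bounds `l < r F < k`. -/
noncomputable def forbiddenWeight (F : Finset α) (l k : ℕ) : α → ℝ :=
  fun e => if e ∈ F then (k : ℝ) - M.r F else -((M.r F : ℝ) - l)

theorem sum_forbiddenWeight (F : Finset α) (l k : ℕ) (I : Finset α) :
    ∑ e ∈ I, M.forbiddenWeight F l k e =
      (I ∩ F).card * ((k : ℝ) - M.r F) + (I \ F).card * -((M.r F : ℝ) - l) :=
  sum_eq_card_mul_add (fun _ he => if_pos he) (fun _ he => if_neg he) I

theorem sum_forbiddenWeight_le_and_eq_iff {F : Finset α} {l k : ℕ} (h1 : l < M.r F)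
    (h2 : M.r F < k) {I : Finset α} (hI : M.Indep I) (hIc : I.card ≤ l ∨ k ≤ I.card) :
    ∑ e ∈ I, M.forbiddenWeight F l k e ≤ l * ((k : ℝ) - M.r F) ∧
      (∑ e ∈ I, M.forbiddenWeight F l k e = l * ((k : ℝ) - M.r F) ↔
        I.card = l ∧ I ⊆ F ∨ I.card = k ∧ (I ∩ F).card = M.r F) := by
  have hr := M.card_inter_le_r hI F
  have hcard := card_inter_add_card_sdiff I F
  rw [sum_forbiddenWeight, ← sdiff_eq_empty_iff_subset, ← card_eq_zero, ← hcard]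
  rw [← hcard] at hIc
  generalize (I ∩ F).card = x at *
  generalize (I \ F).card = y at *
  generalize M.r F = ρ at *
  have h1' : (0 : ℝ) < ρ - l := sub_pos.2 (Nat.cast_lt.2 h1)
  have h2' : (0 : ℝ) < k - ρ := sub_pos.2 (Nat.cast_lt.2 h2)
  rcases hIc with h | h
  · obtain ⟨u, rfl⟩ := Nat.exists_eq_add_of_le h
    push_cast at *
    have hu : (0 : ℝ) ≤ u * (k - ρ) := by positivity
    have hy : (0 : ℝ) ≤ y * (k - (x + y + u)) := mul_nonneg (by positivity) (by linarith)
    refine ⟨by nlinarith, fun he => Or.inl ?_, fun he => ?_⟩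
    · have hu0 : (u : ℝ) * (k - ρ) = 0 := by nlinarith
      have hy0 : (y : ℝ) * (k - (x + y + u)) = 0 := by nlinarith
      have hu1 : u = 0 := by
        rcases mul_eq_zero.1 hu0 with h | h
        · exact_mod_cast h
        · linarith
      have hy1 : y = 0 := by
        rcases mul_eq_zero.1 hy0 with h | h
        · exact_mod_cast h
        · linarith
      omega
    · have hy1 : y = 0 := by omega
      have hu1 : u = 0 := by omega
      subst hy1 hu1
      push_cast
      ring
  · obtain ⟨u, rfl⟩ := Nat.exists_eq_add_of_le hr
    obtain ⟨v, hv⟩ := Nat.exists_eq_add_of_le h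
    have hv' : (x : ℝ) + y = k + v := by exact_mod_cast hv
    push_cast at *
    have hy' : (y : ℝ) = k + v - x := by linarith
    rw [hy']
    have hu : (0 : ℝ) ≤ u * (k - l) := mul_nonneg (by positivity) (by linarith)
    have hvl : (0 : ℝ) ≤ v * (x + u - l) := by positivity
    refine ⟨by nlinarith, fun he => Or.inr ?_, fun he => ?_⟩
    · have hu0 : (u : ℝ) * (k - l) = 0 := by nlinarith
      have hv0 : (v : ℝ) * (x + u - l) = 0 := by nlinarith
      have hu1 : u = 0 := by
        rcases mul_eq_zero.1 hu0 with h | h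
        · exact_mod_cast h
        · linarith
      have hv1 : v = 0 := by
        rcases mul_eq_zero.1 hv0 with h | h
        · exact_mod_cast h
        · linarith
      omega
    · have hu1 : u = 0 := by omega
      have hv1 : v = 0 := by omega
      subst hu1 hv1
      push_cast
      ring

theorem exists_indep_card_inter_eq_r {F : Finset α} {k : ℕ} (hF : M.r F ≤ k)
    (hk : k ≤ M.r univ) : ∃ T, M.Indep T ∧ T.card = k ∧ (T ∩ F).card = M.r F := by
  obtain ⟨X, hXF, hX, hXc⟩ := M.exists_indep_card_eq_r F
  obtain ⟨T, hXT, -, hT, hTc⟩ := M.exists_extend_in hX (subset_univ X) (hXc.trans_le hF) hk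
  exact ⟨T, hT, hTc, le_antisymm (M.card_inter_le_r hT F)
    (hXc ▸ card_le_card (subset_inter hXT hXF))⟩

theorem isFacet_exactPolytope_iff (F : Finset α) (k : ℕ) :
    IsFacet (exactPolytope M k) (incVec F) (M.r F) ↔
      polyDim (incVecs fun I => M.Indep I ∧ I.card = k ∧ (I ∩ F).card = M.r F) + 1 =
        polyDim (incVecs fun I => M.Indep I ∧ I.card = k) := by
  have hsum : ∀ I, ∑ e ∈ I, incVec F e = (I ∩ F).card := fun I => by
    simp [incVec]
  have hpoly : exactPolytope M k = convexHull ℝ (incVecs fun I => M.Indep I ∧ I.card = k) := by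
    simp only [exactPolytope, incVecs, and_assoc]
  rw [hpoly, isFacet_convexHull_incVecs_iff fun I hI => by
    rw [hsum]
    exact_mod_cast M.card_inter_le_r hI.1 F]
  simp only [hsum, Nat.cast_inj, and_assoc]

theorem isFacet_forbiddenWeight_iff_polyDim {P : Finset α → Prop} {F : Finset α} {l k : ℕ}
    (h1 : l < M.r F) (h2 : M.r F < k)
    (hP : ∀ I, P I → M.Indep I ∧ (I.card ≤ l ∨ k ≤ I.card))
    (hPlk : ∀ I, M.Indep I → I.card = l ∨ I.card = k → P I) :
    IsFacet (convexHull ℝ (incVecs P)) (M.forbiddenWeight F l k) (l * ((k : ℝ) - M.r F)) ↔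
      polyDim (incVecs fun I => M.Indep I ∧
        (I.card = l ∧ I ⊆ F ∨ I.card = k ∧ (I ∩ F).card = M.r F)) + 1 = polyDim (incVecs P) := by
  rw [isFacet_convexHull_incVecs_iff fun I hI =>
    (M.sum_forbiddenWeight_le_and_eq_iff h1 h2 (hP I hI).1 (hP I hI).2).1]
  rw [incVecs_congr fun I => ?_]
  constructor
  · rintro ⟨hI, he⟩
    exact ⟨(hP I hI).1,
      (M.sum_forbiddenWeight_le_and_eq_iff h1 h2 (hP I hI).1 (hP I hI).2).2.1 he⟩
  · rintro ⟨hI, he⟩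
    have hPI := hPlk I hI (he.imp And.left And.left)
    exact ⟨hPI, (M.sum_forbiddenWeight_le_and_eq_iff h1 h2 hI (hP I hPI).2).2.2 he⟩

theorem isFacet_forbiddenWeight_zero_iff {P : Finset α → Prop} {F : Finset α} {k : ℕ}
    (h1 : 0 < M.r F) (h2 : M.r F < k) (hk : k ≤ M.r univ)
    (hP : ∀ I, P I → M.Indep I ∧ (I.card = 0 ∨ k ≤ I.card))
    (hPk : ∀ I, M.Indep I → I.card = 0 ∨ I.card = k → P I) :
    IsFacet (convexHull ℝ (incVecs P)) (M.forbiddenWeight F 0 k)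
      ((0 : ℕ) * ((k : ℝ) - M.r F)) ↔ IsFacet (exactPolytope M k) (incVec F) (M.r F) := by
  have hk0 : k ≠ 0 := by omega
  obtain ⟨T, hT, hTc, hTF⟩ := M.exists_indep_card_inter_eq_r h2.le hk
  rw [M.isFacet_forbiddenWeight_iff_polyDim h1 h2
    (fun I hI => (hP I hI).imp_right (Or.imp_left Eq.le)) hPk, M.isFacet_exactPolytope_iff]
  have hface : polyDim (incVecs fun I => M.Indep I ∧
      (I.card = 0 ∧ I ⊆ F ∨ I.card = k ∧ (I ∩ F).card = M.r F)) =
      polyDim (incVecs fun I => M.Indep I ∧ I.card = k ∧ (I ∩ F).card = M.r F) + 1 := by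
    rw [← polyDim_incVecs_eq_empty_or ⟨T, hT, hTc, hTF⟩ hk0 fun I hI => hI.2.1]
    refine congrArg _ (incVecs_congr fun I => ?_)
    rw [card_eq_zero]
    constructor
    · rintro ⟨hI, h | h⟩
      exacts [Or.inl h.1, Or.inr ⟨hI, h⟩]
    · rintro (rfl | h)
      exacts [⟨M.empty_indep, Or.inl ⟨rfl, empty_subset F⟩⟩, ⟨h.1, Or.inr h.2⟩]
  have hfull : polyDim (incVecs P) = polyDim (incVecs fun I => M.Indep I ∧ I.card = k) + 1 := by
    rw [← polyDim_incVecs_eq_empty_or ⟨T, hT, hTc⟩ hk0 fun I hI => hI.2]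
    have hmem : ∀ I, M.Indep I → I.card = k ∨ I.card = 0 →
        I = ∅ ∨ M.Indep I ∧ I.card = k := fun I hI h =>
      h.symm.imp card_eq_zero.1 fun h => ⟨hI, h⟩
    obtain hlt | heq := hk.lt_or_eq
    · rw [M.polyDim_incVecs_eq_card (by omega) hlt (Nat.zero_le _) hk0
        (fun I hI h => hPk I hI h.symm), M.polyDim_incVecs_eq_card (by omega) hlt (Nat.zero_le _)
        hk0 hmem]
    · refine congrArg _ (incVecs_congr fun I => ⟨fun h => ?_, ?_⟩)
      · obtain ⟨hI, hc⟩ := hP I h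
        have := M.card_le_r hI (subset_univ I)
        exact hmem I hI (by omega)
      · rintro (rfl | h)
        exacts [hPk _ M.empty_indep (Or.inl rfl), hPk I h.1 (Or.inr h.2)]
  rw [hface, hfull, Nat.add_right_cancel_iff]

theorem forbiddenWeight_ne_smul {F : Finset α} {l k : ℕ} (h1 : 0 < M.r F) (h2 : M.r F < k)
    {b : α → ℝ} (hbF : ∀ e ∈ F, b e = 0) {t : ℝ} (ht : t • M.forbiddenWeight F l k = b) :
    b = 0 := by
  obtain ⟨f, hf⟩ : F.Nonempty := by
    rw [nonempty_iff_ne_empty]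
    rintro rfl
    rw [r_empty] at h1
    exact h1.false
  have h := congrFun ht f
  rw [hbF f hf, Pi.smul_apply, smul_eq_mul, forbiddenWeight, if_pos hf] at h
  have h2' : (k : ℝ) - M.r F ≠ 0 := sub_ne_zero.2 (Nat.cast_injective.ne h2.ne')
  rw [← ht, (mul_eq_zero.1 h).resolve_right h2', zero_smul]

theorem isFacet_forbiddenWeight_pos_iff {P : Finset α → Prop} {F : Finset α} {l k : ℕ}
    (hl : 0 < l) (h1 : l < M.r F) (h2 : M.r F < k) (hk : k ≤ M.r univ)
    (hP : ∀ I, P I → M.Indep I ∧ (I.card ≤ l ∨ k ≤ I.card))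
    (hPlk : ∀ I, M.Indep I → I.card = l ∨ I.card = k → P I) :
    IsFacet (convexHull ℝ (incVecs P)) (M.forbiddenWeight F l k) (l * ((k : ℝ) - M.r F)) ↔
      M.ClosedSet F ∧ (M.kInseparable k Fᶜ ∨ k < M.r univ) := by
  have hr0 : 0 < M.r F := by omega
  obtain ⟨T, hT, hTc, hTF⟩ := M.exists_indep_card_inter_eq_r h2.le hk
  obtain ⟨J, -, hJF, hJ, hJc⟩ := M.exists_extend_in M.empty_indep (empty_subset F) (n := l)
    (by simp) h1.le
  have h2' : (0 : ℝ) < k - M.r F := sub_pos.2 (Nat.cast_lt.2 h2)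
  have hTd : (T \ F).card = k - M.r F := by
    have := card_inter_add_card_sdiff T F
    omega
  obtain ⟨f₀, hf₀⟩ : F.Nonempty := by
    rw [nonempty_iff_ne_empty]
    rintro rfl
    rw [r_empty] at hr0
    exact hr0.false
  obtain ⟨e₀, he₀⟩ : (T \ F).Nonempty := by
    rw [← card_pos]
    omega
  have hw : M.forbiddenWeight F l k ≠ 0 := fun h => by
    have := congrFun h f₀
    rw [forbiddenWeight, if_pos hf₀] at this
    exact h2'.ne' this
  have hne : (incVecs fun I => M.Indep I ∧
      (I.card = l ∧ I ⊆ F ∨ I.card = k ∧ (I ∩ F).card = M.r F)).Nonempty :=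
    ⟨_, T, ⟨hT, Or.inr ⟨hTc, hTF⟩⟩, rfl⟩
  rw [M.isFacet_forbiddenWeight_iff_polyDim h1 h2 hP hPlk,
    M.polyDim_incVecs_eq_card hl (by omega) hk (by omega) hPlk,
    polyDim_add_one_eq_card_iff hne hw
      (forall_mem_incVecs (p := (· = l * ((k : ℝ) - M.r F))).2 fun I hI =>
        (M.sum_forbiddenWeight_le_and_eq_iff h1 h2 hI.1 (by omega)).2.2 hI.2)]
  constructor
  · intro h
    refine ⟨fun e he => ?_, or_iff_not_imp_right.2 fun hkr hsep => ?_⟩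
    · by_contra hle
      have hz : ∀ I, M.Indep I ∧ (I.card = l ∧ I ⊆ F ∨ I.card = k ∧ (I ∩ F).card = M.r F) →
          ∑ f ∈ I, (Pi.single e (1 : ℝ) : α → ℝ) f = 0 := by
        rintro I ⟨hI, hIc⟩
        refine sum_eq_zero fun f hf => Pi.single_eq_of_ne ?_ 1
        rintro rfl
        rcases hIc with hIc | hIc
        · exact he (hIc.2 hf)
        · have hc := M.card_le_r (M.subset_indep hI (insert_subset hf inter_subset_left))
            (insert_subset_insert f (inter_subset_right : I ∩ F ⊆ F))
          rw [card_insert_of_notMem (by simp [he])] at hc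
          omega
      obtain ⟨t, ht⟩ := h _ 0 (forall_mem_incVecs (p := (· = 0)).2 hz)
      have hne := M.forbiddenWeight_ne_smul hr0 h2
        (fun f hf => Pi.single_eq_of_ne (by rintro rfl; exact he hf) 1) ht
      simpa using congrFun hne e
    · obtain ⟨A, B, ⟨a, ha⟩, ⟨b, hb⟩, hd, hAB, hs⟩ := M.kSeparable_compl_iff.1 hsep
      have hAF : ∀ x ∈ A, x ∉ F := fun x hx => mem_compl.1 (hAB ▸ mem_union_left _ hx)
      have hBF : ∀ x ∈ B, x ∉ F := fun x hx => mem_compl.1 (hAB ▸ mem_union_right _ hx)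
      have hrA : M.r F ≤ M.r (F ∪ A) := M.r_mono subset_union_left
      have hrB : M.r F ≤ M.r (F ∪ B) := M.r_mono subset_union_left
      set w : α → ℝ := fun x => if x ∈ A then (M.r (F ∪ B) : ℝ) - M.r F else
        if x ∈ B then -((M.r (F ∪ A) : ℝ) - M.r F) else 0 with hwdef
      have hwA : ∀ x ∈ A, w x = (M.r (F ∪ B) : ℝ) - M.r F := fun x hx => if_pos hx
      have hwB : ∀ x ∈ B, w x = -((M.r (F ∪ A) : ℝ) - M.r F) := fun x hx => by
        rw [hwdef]
        simp only [if_neg (disjoint_right.1 hd hx), if_pos hx]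
      have hwF : ∀ x ∈ F, w x = 0 := fun x hx => by
        rw [hwdef]
        simp only [if_neg fun h => hAF x h hx, if_neg fun h => hBF x h hx]
      have hz : ∀ I, M.Indep I ∧ (I.card = l ∧ I ⊆ F ∨ I.card = k ∧ (I ∩ F).card = M.r F) →
          ∑ x ∈ I, w x = 0 := by
        rintro I ⟨hI, hIc⟩
        rcases hIc with hIc | ⟨hIc, hIF⟩
        · exact sum_eq_zero fun x hx => hwF x (hIc.2 hx)
        have hdiff : I \ F = I ∩ A ∪ I ∩ B := by
          rw [← inter_union_distrib_left, hAB, sdiff_eq_inter_compl]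
        have hdAB : Disjoint (I ∩ A) (I ∩ B) :=
          hd.mono inter_subset_right inter_subset_right
        have hc := card_inter_add_card_sdiff I F
        rw [hdiff, card_union_of_disjoint hdAB] at hc
        have hle : ∀ A : Finset α, (∀ x ∈ A, x ∉ F) →
            (I ∩ F).card + (I ∩ A).card ≤ M.r (F ∪ A) := fun A hA => by
          rw [← card_union_of_disjoint (disjoint_left.2 fun x hx hx' =>
            hA x (mem_inter.1 hx').2 (mem_inter.1 hx).2), ← inter_union_distrib_left]
          exact M.card_inter_le_r hI _
        have hleA := hle A hAF
        have hleB := hle B hBF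
        have hcA : M.r (F ∪ A) = M.r F + (I ∩ A).card := by omega
        have hcB : M.r (F ∪ B) = M.r F + (I ∩ B).card := by omega
        rw [sum_eq_inter_add_sdiff w I F, sum_eq_zero fun x hx => hwF x (mem_inter.1 hx).2, hdiff,
          sum_union hdAB, sum_congr rfl fun x hx => hwA x (mem_inter.1 hx).2,
          sum_congr rfl fun x hx => hwB x (mem_inter.1 hx).2, sum_const, sum_const, hcA, hcB]
        push_cast [nsmul_eq_mul]
        ring
      obtain ⟨t, ht⟩ := h w 0 (forall_mem_incVecs (p := (· = 0)).2 hz)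
      have hw0 := M.forbiddenWeight_ne_smul hr0 h2 hwF ht
      have ha0 := congrFun hw0 a
      have hb0 := congrFun hw0 b
      rw [hwA a ha, Pi.zero_apply, sub_eq_zero, Nat.cast_inj] at ha0
      rw [hwB b hb, Pi.zero_apply, neg_eq_zero, sub_eq_zero, Nat.cast_inj] at hb0
      omega
  · rintro ⟨hcl, hconn⟩ b d hb
    replace hb := forall_mem_incVecs (p := (· = d)).1 hb
    have hβ : ∀ e ∈ F, b e = b f₀ := fun e he => M.weight_eq_of_sum_eq_of_lt hl h1
      (fun I hIF hI hIc => hb I ⟨hI, Or.inl ⟨hIc, hIF⟩⟩) hf₀ he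
    have hγ : ∀ e ∉ F, b e = b e₀ := fun e he => M.weight_eq_of_closed hcl h2 hk hconn
      (fun I hI hIc hIF => hb I ⟨hI, Or.inr ⟨hIc, hIF⟩⟩) (mem_sdiff.1 he₀).2 he
    have hsJ := hb J ⟨hJ, Or.inl ⟨hJc, hJF⟩⟩
    have hsT := hb T ⟨hT, Or.inr ⟨hTc, hTF⟩⟩
    rw [sum_eq_card_mul_add hβ hγ, inter_eq_left.2 hJF, sdiff_eq_empty_iff_subset.2 hJF, hJc,
      card_empty, Nat.cast_zero, zero_mul, add_zero] at hsJ
    rw [sum_eq_card_mul_add hβ hγ, hTF, hTd, Nat.cast_sub h2.le] at hsT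
    refine ⟨b f₀ / (k - M.r F), funext fun e => ?_⟩
    rw [Pi.smul_apply, smul_eq_mul, forbiddenWeight]
    split_ifs with he
    · rw [hβ e he, div_mul_cancel₀ _ h2'.ne']
    · rw [hγ e he, div_mul_eq_mul_div, div_eq_iff h2'.ne']
      linarith

end FinMatroid

/-- facets of P^c(E) induced by rank induced forbidden set
inequalities. -/
theorem forbidden_set_facet_iff {α : Type*} [Fintype α] [DecidableEq α]
    (M : FinMatroid α)
    {m : ℕ} (c : Fin m → ℕ) (hm : 2 ≤ m) (hmono : StrictMono c)
    (hlast : c ⟨m - 1, by omega⟩ ≤ M.r Finset.univ)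
    (F : Finset α) (p : Fin m) (hp : p.val + 1 < m)
    (h1 : c p < M.r F) (h2 : M.r F < c ⟨p.val + 1, hp⟩) :
    IsFacet (cardPolytope M c)
      (fun e => if e ∈ F then ((c ⟨p.val + 1, hp⟩ : ℝ) - M.r F) else -((M.r F : ℝ) - c p))
      ((c p : ℝ) * ((c ⟨p.val + 1, hp⟩ : ℝ) - M.r F)) ↔
      ((c p = 0 ∧ c ⟨0, by omega⟩ = 0 ∧
          IsFacet (exactPolytope M (c ⟨p.val + 1, hp⟩)) (incVec F) (M.r F)) ∨
       (0 < c p ∧ M.ClosedSet F ∧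
          (M.kInseparable (c ⟨p.val + 1, hp⟩) Fᶜ ∨ c ⟨p.val + 1, hp⟩ < M.r Finset.univ))) := by
  have hmem : ∀ q : Fin m, c q ≤ c p ∨ c ⟨p.val + 1, hp⟩ ≤ c q := fun q => by
    rcases Nat.lt_or_ge p.val q.val with h | h
    · exact Or.inr (hmono.monotone (Fin.le_def.2 h))
    · exact Or.inl (hmono.monotone (Fin.le_def.2 h))
  have hk : c ⟨p.val + 1, hp⟩ ≤ M.r univ :=
    (hmono.monotone (Fin.le_def.2 (Nat.le_sub_one_of_lt hp))).trans hlast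
  have hP : ∀ I, (M.Indep I ∧ ∃ q : Fin m, I.card = c q) →
      M.Indep I ∧ (I.card ≤ c p ∨ c ⟨p.val + 1, hp⟩ ≤ I.card) := by
    rintro I ⟨hI, q, hq⟩
    exact ⟨hI, hq ▸ hmem q⟩
  have hPlk : ∀ I, M.Indep I → I.card = c p ∨ I.card = c ⟨p.val + 1, hp⟩ →
      M.Indep I ∧ ∃ q : Fin m, I.card = c q := fun I hI h =>
    ⟨hI, h.elim (fun h => ⟨_, h⟩) fun h => ⟨_, h⟩⟩
  have hpoly : cardPolytope M c =
      convexHull ℝ (incVecs fun I => M.Indep I ∧ ∃ q : Fin m, I.card = c q) := by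
    simp only [cardPolytope, incVecs, and_assoc]
  rw [hpoly]
  change IsFacet _ (M.forbiddenWeight F (c p) (c ⟨p.val + 1, hp⟩)) _ ↔ _
  rcases Nat.eq_zero_or_pos (c p) with h0 | hpos
  · have hc0 : c ⟨0, by omega⟩ = 0 := by
      have hle : c ⟨0, by omega⟩ ≤ c p := hmono.monotone (Fin.le_def.2 (Nat.zero_le p.val))
      omega
    simp only [h0, Nat.le_zero] at h1 hP hPlk ⊢
    rw [M.isFacet_forbiddenWeight_zero_iff h1 h2 hk hP hPlk]
    simp [hc0]
  · rw [M.isFacet_forbiddenWeight_pos_iff hpos h1 h2 hk hP hPlk]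
    simp [hpos, hpos.ne']
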